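/- arXiv:1912.03728 — 2 statements merged into one kernel-verified Lean document; each statement's English description precedes it below -/
import Mathlib

section
/- Let n ∈ ℕ, let P₀ and P₁ be n×n real column-stochastic matrices (entrywise nonnegative with each column summing to 1), let e ∈ [0,1]ⁿ, let E := diag(e) and d := 1 − e (entrywise). Let a, ā, c, B ∈ ℝ with a² > 1, 0 < ā² < c² < 1, B > 0, and suppose a²·ρ(P₁E) < 1. Fix θ ∈ ℕ with θ ≥ 1, γ ∈ {1,…,n}, and y > 0 with y ≥ B·c^{−2θ}, and set ν := max{ θ, ⌈ log(y/B) / log(1/c²) ⌉ }. Then B · dᵀ (P₁E)^{ν−θ} (I − P₁E)⁻¹ P₀^{θ−1} P₁ δ_γ ≥ y · c^{2ν} dᵀ (P₁E)^{ν−θ} (I − c²P₁E)⁻¹ P₀^{θ−1} P₁ δ_γ. -/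
/-!
The claim splits into two monotonicity facts. Since `ν ≥ log (y/B) / log (1/c²)`, one has
`y * c^(2ν) ≤ B`, so it suffices that `b ↦ dᵀ M^k (1 - b M)⁻¹ w` is nonnegative and does not
decrease from `b = c²` to `b = 1`, where `M = P₁ E` and `w = P₀^(θ-1) P₁ δ_γ` are entrywise
nonnegative.

By Gelfand's formula (`tendsto_pow_of_specRad_lt_one`), spectral radius below one gives `M^m → 0`,
hence also `(b M)^m → 0` for `0 ≤ b ≤ 1`. Then `1 - b M` is invertible with entrywise nonnegative
inverse, the limit of the partial geometric sums (`one_sub_inv_nonneg`). The comparison of the two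
inverses is the resolvent identity
`(1 - M)⁻¹ - (1 - b M)⁻¹ = (1 - b) (1 - M)⁻¹ M (1 - b M)⁻¹`.
-/

open Matrix

/-- Spectral radius of a real square matrix, computed via its complex spectrum. -/
noncomputable def specRad {n : ℕ} (K : Matrix (Fin n) (Fin n) ℝ) : ℝ :=
  (spectralRadius ℂ (K.map Complex.ofReal)).toReal

/-- A real square matrix is column stochastic if it is entrywise nonnegative
with each column summing to 1. -/
def ColStochastic {n : ℕ} (P : Matrix (Fin n) (Fin n) ℝ) : Prop :=
  (∀ i j, 0 ≤ P i j) ∧ ∀ j, (∑ i, P i j) = 1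

section Norms

attribute [local instance] Matrix.linftyOpNormedRing Matrix.linftyOpNormedAlgebra

theorem tendsto_pow_of_specRad_lt_one {n : ℕ} (M : Matrix (Fin n) (Fin n) ℝ)
    (h : specRad M < 1) : Filter.Tendsto (fun m : ℕ => M ^ m) Filter.atTop (nhds 0) := by
  set A : Matrix (Fin n) (Fin n) ℂ := M.map Complex.ofReal with hA
  have hlt : spectralRadius ℂ A < 1 := by
    -- finiteness matters here: `ENNReal.toReal` sends `⊤` to `0`
    have hfin : spectralRadius ℂ A ≠ ⊤ := by
      cases n with
      | zero => simp [spectralRadius]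
      | succ n => exact ((spectrum.spectralRadius_le_nnnorm A).trans_lt ENNReal.coe_lt_top).ne
    rw [← ENNReal.toReal_lt_toReal hfin ENNReal.one_ne_top]
    simpa [specRad] using h
  obtain ⟨r, hr1, hr2⟩ := exists_between hlt
  have hG := spectrum.pow_nnnorm_pow_one_div_tendsto_nhds_spectralRadius A
  have hbound : ∀ᶠ m : ℕ in Filter.atTop, (‖A ^ m‖₊ : ENNReal) ≤ r ^ m := by
    filter_upwards [hG.eventually (gt_mem_nhds hr1), Filter.eventually_gt_atTop 0] with m hm hm0
    have hm0' : (m : ℝ) ≠ 0 := by positivity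
    have h2 := ENNReal.rpow_le_rpow hm.le (Nat.cast_nonneg (α := ℝ) m)
    rwa [← ENNReal.rpow_mul, one_div, inv_mul_cancel₀ hm0', ENNReal.rpow_one,
      ENNReal.rpow_natCast] at h2
  have hA0 : Filter.Tendsto (fun m : ℕ => A ^ m) Filter.atTop (nhds 0) := by
    refine tendsto_zero_iff_norm_tendsto_zero.2 ?_
    have h3 : Filter.Tendsto (fun m : ℕ => (‖A ^ m‖₊ : ENNReal)) Filter.atTop (nhds 0) :=
      tendsto_of_tendsto_of_tendsto_of_le_of_le' tendsto_const_nhds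
        (ENNReal.tendsto_pow_atTop_nhds_zero_of_lt_one hr2)
        (Filter.Eventually.of_forall fun _ => zero_le) hbound
    have h4 : Filter.Tendsto (fun m : ℕ => ‖A ^ m‖₊) Filter.atTop (nhds 0) :=
      ENNReal.tendsto_coe.1 (by simpa using h3)
    exact NNReal.tendsto_coe.2 h4
  have hMA : ∀ m : ℕ, M ^ m = (A ^ m).map Complex.re := by
    intro m
    have h5 : A ^ m = (M ^ m).map Complex.ofReal :=
      (map_pow (Complex.ofRealHom.mapMatrix (m := Fin n)) M m).symm
    ext i j
    simp [h5]
  have hc : Continuous fun X : Matrix (Fin n) (Fin n) ℂ => X.map Complex.re :=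
    continuous_id.matrix_map Complex.continuous_re
  have h6 := (hc.tendsto 0).comp hA0
  simp only [Function.comp_def, ← hMA] at h6
  convert h6 using 2
  ext i j
  simp

theorem isUnit_one_sub_of_tendsto_pow {n : ℕ} (M : Matrix (Fin n) (Fin n) ℝ)
    (h : Filter.Tendsto (fun m : ℕ => M ^ m) Filter.atTop (nhds 0)) : IsUnit (1 - M) := by
  have h1 := tendsto_zero_iff_norm_tendsto_zero.1 h
  obtain ⟨m, hm⟩ := (h1.eventually (gt_mem_nhds zero_lt_one)).exists
  have hu := isUnit_one_sub_of_norm_lt_one hm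
  rw [← mul_neg_geom_sum] at hu
  rw [Matrix.isUnit_iff_isUnit_det] at hu ⊢
  rw [Matrix.det_mul] at hu
  exact isUnit_of_mul_isUnit_left hu

end Norms

theorem matrix_mul_nonneg {n : ℕ} {A C : Matrix (Fin n) (Fin n) ℝ}
    (hA : ∀ i j, 0 ≤ A i j) (hC : ∀ i j, 0 ≤ C i j) (i j : Fin n) : 0 ≤ (A * C) i j := by
  rw [Matrix.mul_apply]
  exact Finset.sum_nonneg fun k _ => mul_nonneg (hA i k) (hC k j)

theorem matrix_pow_nonneg {n : ℕ} {A : Matrix (Fin n) (Fin n) ℝ}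
    (hA : ∀ i j, 0 ≤ A i j) (k : ℕ) : ∀ i j, 0 ≤ (A ^ k) i j := by
  induction k with
  | zero =>
    intro i j
    rw [pow_zero, Matrix.one_apply]
    split_ifs <;> norm_num
  | succ k ih =>
    rw [pow_succ]
    exact matrix_mul_nonneg ih hA

/-- The partial geometric sums of `M` are entrywise nonnegative and equal
`(1 - M)⁻¹ - (1 - M)⁻¹ M^m`, which tends to `(1 - M)⁻¹`. -/
theorem one_sub_inv_nonneg {n : ℕ} {M : Matrix (Fin n) (Fin n) ℝ}
    (hM : ∀ i j, 0 ≤ M i j)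
    (h : Filter.Tendsto (fun m : ℕ => M ^ m) Filter.atTop (nhds 0)) (i j : Fin n) :
    0 ≤ (1 - M)⁻¹ i j := by
  have hu := (Matrix.isUnit_iff_isUnit_det _).1 (isUnit_one_sub_of_tendsto_pow M h)
  have hS : ∀ m : ℕ, (1 - M)⁻¹ * (1 - M ^ m) = ∑ k ∈ Finset.range m, M ^ k := by
    intro m
    rw [← mul_neg_geom_sum, ← Matrix.mul_assoc, Matrix.nonsing_inv_mul _ hu, Matrix.one_mul]
  have hc : Continuous fun X : Matrix (Fin n) (Fin n) ℝ => ((1 - M)⁻¹ * (1 - X)) i j :=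
    (continuous_const.matrix_mul (continuous_const.sub continuous_id)).matrix_elem i j
  have ht := (hc.tendsto 0).comp h
  simp only [Function.comp_def, hS, sub_zero, Matrix.mul_one] at ht
  refine ge_of_tendsto' ht fun m => ?_
  rw [Matrix.sum_apply]
  exact Finset.sum_nonneg fun k _ => matrix_pow_nonneg hM k i j

theorem one_sub_inv_sub_one_sub_smul_inv {n : ℕ} {M : Matrix (Fin n) (Fin n) ℝ} {b : ℝ}
    (hu : IsUnit (1 - M)) (hv : IsUnit (1 - b • M)) :
    (1 - M)⁻¹ - (1 - b • M)⁻¹ = (1 - b) • ((1 - M)⁻¹ * M * (1 - b • M)⁻¹) := by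
  rw [Matrix.isUnit_iff_isUnit_det] at hu hv
  have h1 : (1 - b) • M = (1 - b • M) - (1 - M) := by
    rw [sub_smul, one_smul]
    abel
  calc (1 - M)⁻¹ - (1 - b • M)⁻¹
      = (1 - M)⁻¹ * ((1 - b • M) - (1 - M)) * (1 - b • M)⁻¹ := by
        rw [Matrix.mul_sub, Matrix.sub_mul, Matrix.nonsing_inv_mul _ hu, Matrix.mul_assoc,
          Matrix.mul_nonsing_inv _ hv, Matrix.mul_one, Matrix.one_mul]
    _ = _ := by rw [← h1, Matrix.mul_smul, Matrix.smul_mul]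

/-- The choice of `ν` as at least `log (y/B) / log (1/q)`, with `q = c²`, makes `y q^ν ≤ B`. -/
theorem mul_pow_le_of_log_div_log_le {y B q : ℝ} (hy : 0 < y) (hB : 0 < B) (hq : 0 < q)
    (hq1 : q < 1) {ν : ℕ} (hν : Real.log (y / B) / Real.log (1 / q) ≤ ν) :
    y * q ^ ν ≤ B := by
  have hl : 0 < Real.log (1 / q) := Real.log_pos (by rwa [lt_div_iff₀ hq, one_mul])
  rw [div_le_iff₀ hl, ← Real.log_pow,
    Real.log_le_log_iff (by positivity) (by positivity), div_le_iff₀ hB, div_pow, one_pow] at hν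
  calc y * q ^ ν ≤ (1 / q ^ ν * B) * q ^ ν := by gcongr
    _ = B := by field_simp

/-- For `y ≥ B·c^{-2θ}`, we have `B·f̃_θ(1,γ) ≥ y·f̃_θ(c²,γ)`, where
`f̃_θ(b,γ) = b^ν dᵀ(P₁E)^{ν-θ}(I - bP₁E)⁻¹ P₀^{θ-1} P₁ δ_γ` and
`ν = max{θ, ⌈log(y/B)/log(1/c²)⌉}`. -/
theorem Bftilde_one_ge_y_ftilde_csq (n : ℕ) (P0 P1 : Matrix (Fin n) (Fin n) ℝ)
    (hP0 : ColStochastic P0) (hP1 : ColStochastic P1)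
    (e : Fin n → ℝ) (he : ∀ i, e i ∈ Set.Icc (0 : ℝ) 1)
    (a abar c B : ℝ)
    (ha : 1 < a ^ 2) (h1 : 0 < abar ^ 2) (h2 : abar ^ 2 < c ^ 2) (h3 : c ^ 2 < 1)
    (hB : 0 < B) (hρ : a ^ 2 * specRad (P1 * Matrix.diagonal e) < 1)
    (θ : ℕ) (hθ : 1 ≤ θ) (γ : Fin n)
    (y : ℝ) (hy : 0 < y) (hyB : B / c ^ (2 * θ) ≤ y) :
    let PE := P1 * Matrix.diagonal e
    let d : Fin n → ℝ := fun i => 1 - e i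
    let ν : ℕ := max θ (Int.ceil (Real.log (y / B) / Real.log (1 / c ^ 2))).toNat
    y * (c ^ (2 * ν) *
        (d ⬝ᵥ ((PE ^ (ν - θ)) * (1 - (c ^ 2) • PE)⁻¹ * P0 ^ (θ - 1) * P1).mulVec
          (Pi.single γ 1)))
      ≤ B * (d ⬝ᵥ ((PE ^ (ν - θ)) * (1 - PE)⁻¹ * P0 ^ (θ - 1) * P1).mulVec
          (Pi.single γ 1)) := by
  intro PE d ν
  have hq : 0 < c ^ 2 := h1.trans h2
  have hPE : ∀ i j, 0 ≤ PE i j := fun i j => by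
    simp only [PE, Matrix.mul_diagonal]
    exact mul_nonneg (hP1.1 i j) (he j).1
  have hspec : specRad PE < 1 := by
    have h0 : 0 ≤ specRad PE := ENNReal.toReal_nonneg
    have : specRad PE ≤ a ^ 2 * specRad PE := le_mul_of_one_le_left h0 ha.le
    exact this.trans_lt hρ
  have ht := tendsto_pow_of_specRad_lt_one PE hspec
  have htq : Filter.Tendsto (fun m : ℕ => (c ^ 2 • PE) ^ m) Filter.atTop (nhds 0) := by
    simp only [smul_pow]
    simpa using (tendsto_pow_atTop_nhds_zero_of_lt_one hq.le h3).smul ht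
  have hqPE : ∀ i j, 0 ≤ (c ^ 2 • PE) i j := fun i j => mul_nonneg hq.le (hPE i j)
  have hN := one_sub_inv_nonneg hPE ht
  have hNq := one_sub_inv_nonneg hqPE htq
  have hle : ∀ i j, 0 ≤ ((1 - PE)⁻¹ - (1 - c ^ 2 • PE)⁻¹) i j := fun i j => by
    rw [one_sub_inv_sub_one_sub_smul_inv (isUnit_one_sub_of_tendsto_pow _ ht)
      (isUnit_one_sub_of_tendsto_pow _ htq)]
    exact mul_nonneg (sub_nonneg.2 h3.le) (matrix_mul_nonneg (matrix_mul_nonneg hN hPE) hNq i j)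
  -- the functional `X ↦ dᵀ M^(ν-θ) X P₀^(θ-1) P₁ δ_γ` is nonnegative on nonnegative matrices
  have hpos : ∀ X : Matrix (Fin n) (Fin n) ℝ, (∀ i j, 0 ≤ X i j) →
      0 ≤ d ⬝ᵥ ((PE ^ (ν - θ)) * X * P0 ^ (θ - 1) * P1).mulVec (Pi.single γ 1) := by
    intro X hX
    rw [Matrix.mulVec_single_one]
    exact Finset.sum_nonneg fun i _ => mul_nonneg (sub_nonneg.2 (he i).2)
      (matrix_mul_nonneg (matrix_mul_nonneg (matrix_mul_nonneg (matrix_pow_nonneg hPE _) hX)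
        (matrix_pow_nonneg hP0.1 _)) hP1.1 i γ)
  have hmono := hpos _ hle
  rw [Matrix.mul_sub, Matrix.sub_mul, Matrix.sub_mul, Matrix.sub_mulVec, dotProduct_sub,
    sub_nonneg] at hmono
  have hν : Real.log (y / B) / Real.log (1 / c ^ 2) ≤ (ν : ℝ) := by
    refine (Int.le_ceil _).trans ?_
    have : ⌈Real.log (y / B) / Real.log (1 / c ^ 2)⌉ ≤ (ν : ℤ) :=
      (Int.self_le_toNat _).trans (Int.ofNat_le.2 (le_max_right _ _))
    exact_mod_cast this
  have hyB' := mul_pow_le_of_log_div_log_le hy hB hq h3 hν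
  rw [← mul_assoc, pow_mul]
  exact mul_le_mul hyB' hmono (hpos _ hNq) hB.le
end

section
/- Let n ∈ ℕ, let P₀ and P₁ be n×n real column-stochastic matrices, let e ∈ [0,1]ⁿ, let E := diag(e) and d := 1 − e (entrywise). Let a, ā, c, M, B ∈ ℝ with a² > 1, 0 < ā² < c² < 1, M > 0, B > 0; set M̄ := M/(a²−1), and suppose a²·ρ(P₁E) < 1. Fix θ ∈ ℕ with θ ≥ 1, γ ∈ {1,…,n}, 𝒳 ≥ 0 and y > 0 with y ≥ 𝒳. Define g̃_θ(b,γ) := b^θ dᵀ (I − bP₁E)⁻¹ P₀^{θ−1} P₁ δ_γ, ν := max{ θ, ⌈ log(y/B)/log(1/c²) ⌉ }, f̃_θ(b,γ) := b^ν dᵀ (P₁E)^{ν−θ} (I − bP₁E)⁻¹ P₀^{θ−1} P₁ δ_γ, J(θ,y,γ) := g̃_θ(ā²,γ)·y + M̄·( g̃_θ(a²,γ) − g̃_θ(1,γ) ) − ( B·f̃_θ(1,γ) + y·( g̃_θ(c²,γ) − f̃_θ(c²,γ) ) ), Z_θ(b) := b^θ dᵀ (I − bP₁E)⁻¹, and Q_𝒳(θ)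 := ( Z_θ(ā²) − Z_θ(c²) )·max{𝒳, B·c^{−2θ}} + M̄·( Z_θ(a²) − Z_θ(1) ). Then J(θ,y,γ) ≤ Q_𝒳(θ) · P₀^{θ−1} P₁ δ_γ. -/
/-!
Write `A = P₁E`, `v = P₀^{θ-1}P₁δ_γ` and `w k = dᵀ A^k v`, which is nonnegative because all factors
are. As `ρ(A) < 1/a² < 1`, Gelfand's formula makes the powers of `A` summable, so for `0 ≤ b ≤ 1`
the resolvent `(I - bA)⁻¹` is its Neumann series. With `s = θ + k` this gives
`g̃_θ(b) = ∑ₖ b^s w k`, while `f̃_θ(b)` is the part of this sum with `s ≥ ν`.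

The `M̄` terms are the same on both sides and cancel. With `m = max 𝒳 (B c^{-2θ})`, what is left is a
comparison of two series, which holds term by term:
* for `θ ≤ s < ν`, one has `y ā^{2s} - y c^{2s} ≤ m (ā^{2s} - c^{2s})`, since `θ < ν` forces
  `B c^{-2θ} < y`, hence `m ≤ y`, and `ā² < c²`;
* for `s ≥ ν`, one has `y ā^{2s} - B ≤ m (ā^{2s} - c^{2s})`: the choice of `ν` gives `y c^{2s} ≤ B`,
  which settles the case `m ≤ y`, and with it `m c^{2s} ≤ B`, which settles the case `y ≤ m`.

`summable_pow_of_specRad_lt_one` and `hasSum_resolvent` carry the first part, `term_le` the second.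
-/

open Matrix

section Neumann

attribute [local instance] Matrix.linftyOpNormedRing Matrix.linftyOpNormedAlgebra

open Filter Topology in
/-- By Gelfand's formula `‖A^k‖ ≤ r^k` eventually, for any `r` between the spectral radius of `A`
and `1`. The formula is applied over `ℂ`, and the sum is brought back to `ℝ` by taking real parts. -/
lemma summable_pow_of_specRad_lt_one {n : ℕ} (A : Matrix (Fin n) (Fin n) ℝ)
    (h : specRad A < 1) : Summable (fun k : ℕ => A ^ k) := by
  set C : Matrix (Fin n) (Fin n) ℂ := A.map Complex.ofReal with hC
  have hfin : spectralRadius ℂ C ≠ ⊤ := by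
    have := spectrum.spectralRadius_le_pow_nnnorm_pow_one_div ℂ C 0
    refine ne_top_of_le_ne_top ?_ this
    simp [ENNReal.mul_eq_top]
  have hlt : spectralRadius ℂ C < 1 := by
    rw [← ENNReal.toReal_lt_toReal hfin ENNReal.one_ne_top]
    simpa [specRad] using h
  obtain ⟨r, hr1, hr2⟩ := ENNReal.lt_iff_exists_nnreal_btwn.1 hlt
  have hsC : Summable (fun k : ℕ => C ^ k) := by
    have hev := (spectrum.pow_nnnorm_pow_one_div_tendsto_nhds_spectralRadius C).eventually_lt_const
      hr1
    have hr : (r : ℝ) < 1 := by exact_mod_cast hr2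
    refine Summable.of_norm_bounded_eventually_nat
      (summable_geometric_of_lt_one r.coe_nonneg hr) ?_
    filter_upwards [hev, eventually_gt_atTop 0] with k hk hk0
    have hk' : (0 : ℝ) < k := by exact_mod_cast hk0
    have h2 := ENNReal.rpow_le_rpow hk.le hk'.le
    rw [← ENNReal.rpow_mul, one_div, inv_mul_cancel₀ hk'.ne', ENNReal.rpow_one,
      ENNReal.rpow_natCast] at h2
    have h3 : ‖C ^ k‖₊ ≤ r ^ k := by exact_mod_cast h2
    exact_mod_cast h3
  have hre := hsC.map (Complex.reLm.toAddMonoidHom.mapMatrix (m := Fin n) (n := Fin n))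
    (by
      refine continuous_pi fun i => continuous_pi fun j => ?_
      exact Complex.continuous_re.comp ((continuous_apply j).comp (continuous_apply i)))
  convert hre using 1
  funext k
  have hk : C ^ k = (A ^ k).map Complex.ofReal := by
    have := map_pow (Complex.ofRealHom.mapMatrix (m := Fin n)) A k
    exact this.symm
  ext i j
  simp [hk]

end Neumann

/-- The Neumann series of `(I - bA)⁻¹`, multiplied by `A^m` and paired with `d` and `v`. -/
lemma hasSum_resolvent {n : ℕ} (A : Matrix (Fin n) (Fin n) ℝ)
    (hA : Summable (fun k : ℕ => A ^ k)) (b : ℝ) (hb0 : 0 ≤ b) (hb1 : b ≤ 1)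
    (d v : Fin n → ℝ) (m : ℕ) :
    HasSum (fun k : ℕ => b ^ k * (d ⬝ᵥ (A ^ (m + k)).mulVec v))
      (d ⬝ᵥ (A ^ m * (1 - b • A)⁻¹).mulVec v) := by
  have hs : Summable (fun k : ℕ => (b • A) ^ k) := by
    refine Pi.summable.2 fun i => Pi.summable.2 fun j => ?_
    have hij : Summable (fun k : ℕ => (A ^ k) i j) := Pi.summable.1 (Pi.summable.1 hA i) j
    refine Summable.of_norm_bounded hij.norm fun k => ?_
    rw [smul_pow, Matrix.smul_apply, smul_eq_mul, norm_mul, norm_pow]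
    have : ‖b‖ ^ k ≤ 1 := pow_le_one₀ (norm_nonneg _) (by rwa [Real.norm_of_nonneg hb0])
    exact mul_le_of_le_one_left (norm_nonneg _) this
  have hinv : (1 - b • A)⁻¹ = ∑' k : ℕ, (b • A) ^ k :=
    Matrix.inv_eq_right_inv hs.one_sub_mul_tsum_pow
  rw [hinv]
  let φ : Matrix (Fin n) (Fin n) ℝ →+ ℝ :=
    { toFun := fun K => d ⬝ᵥ (A ^ m * K).mulVec v
      map_zero' := by simp
      map_add' := fun K L => by simp [mul_add, Matrix.add_mulVec, dotProduct_add] }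
  have hφ : Continuous φ := by
    change Continuous fun K : Matrix (Fin n) (Fin n) ℝ => d ⬝ᵥ (A ^ m * K).mulVec v
    fun_prop
  change HasSum _ (φ (∑' k : ℕ, (b • A) ^ k))
  convert hs.hasSum.map φ hφ using 1
  funext k
  simp [φ, smul_pow, pow_add, Matrix.smul_mulVec]

lemma mulVec_nonneg' {n : ℕ} {A : Matrix (Fin n) (Fin n) ℝ} {v : Fin n → ℝ}
    (hA : ∀ i j, 0 ≤ A i j) (hv : ∀ i, 0 ≤ v i) (i : Fin n) : 0 ≤ A.mulVec v i := by
  simp only [Matrix.mulVec, dotProduct]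
  exact Finset.sum_nonneg fun j _ => mul_nonneg (hA i j) (hv j)

lemma pow_mulVec_nonneg {n : ℕ} {A : Matrix (Fin n) (Fin n) ℝ} {v : Fin n → ℝ}
    (hA : ∀ i j, 0 ≤ A i j) (hv : ∀ i, 0 ≤ v i) (k : ℕ) (i : Fin n) :
    0 ≤ (A ^ k).mulVec v i := by
  induction k generalizing i with
  | zero => simpa using hv i
  | succ k ih =>
    rw [pow_succ', ← Matrix.mulVec_mulVec]
    exact mulVec_nonneg' hA ih i

/-- `⌈log (y/B) / log (1/q)⌉`, truncated at `0`, is the first time `s` in `ℕ` with `y q^s ≤ B`. -/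
lemma ceil_log_le_iff {y B q : ℝ} (hy : 0 < y) (hB : 0 < B) (hq0 : 0 < q) (hq1 : q < 1)
    (s : ℕ) :
    (Int.ceil (Real.log (y / B) / Real.log (1 / q))).toNat ≤ s ↔ y * q ^ s ≤ B := by
  have hlog : 0 < Real.log (1 / q) := Real.log_pos (by rw [lt_div_iff₀ hq0]; linarith)
  rw [Int.toNat_le, Int.ceil_le, div_le_iff₀ hlog]
  push_cast
  rw [← Real.log_pow, Real.log_le_log_iff (by positivity) (by positivity), one_div, inv_pow,
    div_le_iff₀ hB, inv_mul_eq_div, le_div_iff₀ (by positivity)]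

/-- The comparison of the coefficients of `w k` on both sides, with `p = ā²`, `q = c²`. -/
lemma term_le {X y B p q : ℝ} (hy : 0 < y) (hyX : X ≤ y) (hB : 0 < B) (hp : 0 < p)
    (hpq : p < q) (hq : q < 1) (θ k N : ℕ)
    (hN : N = max θ (Int.ceil (Real.log (y / B) / Real.log (1 / q))).toNat - θ) :
    p ^ (θ + k) * y - (B * (if k < N then 0 else 1)
        + y * (q ^ (θ + k) - (if k < N then 0 else q ^ (θ + k))))
      ≤ max X (B / q ^ θ) * (p ^ (θ + k) - q ^ (θ + k)) := by
  have hq0 : 0 < q := hp.trans hpq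
  have hle : p ^ (θ + k) ≤ q ^ (θ + k) := pow_le_pow_left₀ hp.le hpq.le _
  have hpp : 0 < p ^ (θ + k) := by positivity
  have key := ceil_log_le_iff hy hB hq0 hq
  split_ifs with hk
  · have h1 : ¬ y * q ^ θ ≤ B := by rw [← key]; omega
    have h2 : max X (B / q ^ θ) ≤ y := by
      refine max_le hyX ?_
      rw [div_le_iff₀ (by positivity)]
      exact (not_le.1 h1).le
    nlinarith
  · have h1 : y * q ^ (θ + k) ≤ B := by rw [← key]; omega
    rcases le_total (max X (B / q ^ θ)) y with h | h
    · nlinarith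
    · have h2 : max X (B / q ^ θ) * q ^ (θ + k) ≤ B := by
        rw [max_mul_of_nonneg _ _ (by positivity)]
        refine max_le (le_trans ?_ h1) ?_
        · exact mul_le_mul_of_nonneg_right hyX (by positivity)
        · have : B / q ^ θ * q ^ (θ + k) = B * q ^ k := by
            rw [pow_add]; field_simp
          rw [this]
          exact mul_le_of_le_one_right hB.le (pow_le_one₀ hq0.le hq.le)
      nlinarith

/-- If `y ≥ 𝒳` then the closed form `J(θ,y,γ)` of the performance-evaluation
function is bounded above by the pairing of the row vector `Q_𝒳(θ)` with the
column vector `P₀^{θ-1} P₁ δ_γ`. -/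
theorem pef_le_QX_pairing (n : ℕ) (P0 P1 : Matrix (Fin n) (Fin n) ℝ)
    (hP0 : ColStochastic P0) (hP1 : ColStochastic P1)
    (e : Fin n → ℝ) (he : ∀ i, e i ∈ Set.Icc (0 : ℝ) 1)
    (a abar c M B : ℝ)
    (ha : 1 < a ^ 2) (h1 : 0 < abar ^ 2) (h2 : abar ^ 2 < c ^ 2) (h3 : c ^ 2 < 1)
    (hM : 0 < M) (hB : 0 < B)
    (hρ : a ^ 2 * specRad (P1 * Matrix.diagonal e) < 1)
    (θ : ℕ) (hθ : 1 ≤ θ) (γ : Fin n)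
    (X : ℝ) (hX : 0 ≤ X) (y : ℝ) (hy : 0 < y) (hyX : X ≤ y) :
    let PE := P1 * Matrix.diagonal e
    let d : Fin n → ℝ := fun i => 1 - e i
    let Mbar : ℝ := M / (a ^ 2 - 1)
    let vγ : Fin n → ℝ := (P0 ^ (θ - 1) * P1).mulVec (Pi.single γ 1)
    let gt : ℝ → ℝ := fun b => b ^ θ * (d ⬝ᵥ ((1 - b • PE)⁻¹).mulVec vγ)
    let ν : ℕ := max θ (Int.ceil (Real.log (y / B) / Real.log (1 / c ^ 2))).toNat
    let ft : ℝ → ℝ := fun b =>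
      b ^ ν * (d ⬝ᵥ ((PE ^ (ν - θ)) * (1 - b • PE)⁻¹).mulVec vγ)
    let Z : ℝ → Fin n → ℝ := fun b => (b ^ θ) • Matrix.vecMul d (1 - b • PE)⁻¹
    let QX : Fin n → ℝ :=
      max X (B / c ^ (2 * θ)) • (Z (abar ^ 2) - Z (c ^ 2)) + Mbar • (Z (a ^ 2) - Z 1)
    gt (abar ^ 2) * y + Mbar * (gt (a ^ 2) - gt 1)
        - (B * ft 1 + y * (gt (c ^ 2) - ft (c ^ 2)))
      ≤ QX ⬝ᵥ vγ := by
  intro PE d Mbar vγ gt ν ft Z QX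
  have hd : ∀ i, 0 ≤ d i := fun i => sub_nonneg.2 (he i).2
  have hPE : ∀ i j, 0 ≤ PE i j := fun i j => by
    simp only [PE, Matrix.mul_diagonal]
    exact mul_nonneg (hP1.1 i j) (he j).1
  have hv : ∀ i, 0 ≤ vγ i := fun i => by
    simp only [vγ, ← Matrix.mulVec_mulVec]
    refine pow_mulVec_nonneg hP0.1 (mulVec_nonneg' hP1.1 fun j => ?_) _ i
    exact (Pi.single_nonneg.2 zero_le_one : (0 : Fin n → ℝ) ≤ Pi.single γ 1) j
  have hρ1 : specRad PE < 1 := by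
    have h0 : 0 ≤ specRad PE := ENNReal.toReal_nonneg
    have hρ' : a ^ 2 * specRad PE < 1 := hρ
    nlinarith
  have hsum := summable_pow_of_specRad_lt_one PE hρ1
  set w : ℕ → ℝ := fun k => d ⬝ᵥ (PE ^ k).mulVec vγ with hw
  have hw0 : ∀ k, 0 ≤ w k := fun k =>
    Finset.sum_nonneg fun i _ => mul_nonneg (hd i) (pow_mulVec_nonneg hPE hv k i)
  have hc1 : c ^ 2 ≤ 1 := h3.le
  obtain ⟨N, hN⟩ : ∃ N, N = ν - θ := ⟨_, rfl⟩
  have hνN : ν = θ + N := by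
    have : θ ≤ ν := le_max_left _ _
    omega
  have hG : ∀ b : ℝ, 0 ≤ b → b ≤ 1 → HasSum (fun k => b ^ (θ + k) * w k) (gt b) := by
    intro b hb0 hb1
    have := (hasSum_resolvent PE hsum b hb0 hb1 d vγ 0).mul_left (b ^ θ)
    simpa [gt, hw, pow_add, mul_assoc] using this
  have hF : ∀ b : ℝ, 0 ≤ b → b ≤ 1 →
      HasSum (fun k => (if k < N then 0 else b ^ (θ + k)) * w k) (ft b) := by
    intro b hb0 hb1
    have := (hasSum_resolvent PE hsum b hb0 hb1 d vγ N).mul_left (b ^ ν)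
    rw [← hasSum_nat_add_iff' N, Finset.sum_eq_zero (fun i hi => by
      simp [Finset.mem_range.1 hi]), sub_zero]
    simp only [ft, ← hN]
    refine (congrArg (fun f => HasSum f _) (funext fun k => ?_)).mpr this
    rw [if_neg (by omega), hνN, add_comm k N]
    ring
  have hZ : ∀ b, Z b ⬝ᵥ vγ = gt b := fun b => by
    simp only [Z, gt, smul_dotProduct, smul_eq_mul, Matrix.dotProduct_mulVec]
  have hQ : QX ⬝ᵥ vγ = max X (B / c ^ (2 * θ)) * (gt (abar ^ 2) - gt (c ^ 2))
      + Mbar * (gt (a ^ 2) - gt 1) := by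
    simp only [QX, add_dotProduct, smul_dotProduct, sub_dotProduct, hZ, smul_eq_mul]
  have hGp := hG (abar ^ 2) h1.le (h2.le.trans hc1)
  have hGq := hG (c ^ 2) (sq_nonneg c) hc1
  have hL := (hGp.mul_right y).sub (((hF 1 zero_le_one le_rfl).mul_left B).add
    ((hGq.sub (hF (c ^ 2) (sq_nonneg c) hc1)).mul_left y))
  have hR := (hGp.sub hGq).mul_left (max X (B / c ^ (2 * θ)))
  have hmain := hasSum_le (fun k => ?_) hL hR
  · rw [hQ]
    linarith
  · have ht := mul_le_mul_of_nonneg_right (term_le hy hyX hB h1 h2 h3 θ k N hN) (hw0 k)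
    rw [pow_mul c 2 θ]
    simp only [one_pow]
    linarith
end
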